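/- Let 0 < ε < √2·log 2 and let δ ∈ (ε, 1) satisfy g(δ, ε) = 0. Then for every φ ∈ BMO^d_ε([0,1]), the function e^φ is integrable on [0,1] and ∫₀¹ e^φ ≤ B⁺_δ(∫₀¹ φ, ∫₀¹ φ²). -/

import Mathlib

open MeasureTheory Real

/-- The average of `φ` over the interval with endpoints `a`, `b`. -/
noncomputable def avg (φ : ℝ → ℝ) (a b : ℝ) : ℝ := (∫ t in a..b, φ t) / (b - a)

/-- `φ ∈ BMO_ε([a,b])`: `φ` and `φ²` are integrable on `[a,b]` and the mean
oscillation `⟨φ²⟩_J − ⟨φ⟩_J²` is at most `ε²` on every nondegenerate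
subinterval `J = [c,d] ⊆ [a,b]`. -/
def BMOe (ε a b : ℝ) (φ : ℝ → ℝ) : Prop :=
  IntervalIntegrable φ volume a b ∧
  IntervalIntegrable (fun t => (φ t) ^ 2) volume a b ∧
  ∀ c d : ℝ, a ≤ c → c < d → d ≤ b →
    avg (fun t => (φ t) ^ 2) c d - (avg φ c d) ^ 2 ≤ ε ^ 2
/-- `φ ∈ BMO^d_ε([0,1])`: `φ` and `φ²` are integrable on `[0,1]` and the mean
oscillation is at most `ε²` on every dyadic subinterval
`[k/2^n, (k+1)/2^n]` of `[0,1]`. -/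
def BMOd (ε : ℝ) (φ : ℝ → ℝ) : Prop :=
  IntervalIntegrable φ volume 0 1 ∧
  IntervalIntegrable (fun t => (φ t) ^ 2) volume 0 1 ∧
  ∀ n k : ℕ, k < 2 ^ n →
    avg (fun t => (φ t) ^ 2) ((k : ℝ) / 2 ^ n) (((k : ℝ) + 1) / 2 ^ n)
      - (avg φ ((k : ℝ) / 2 ^ n) (((k : ℝ) + 1) / 2 ^ n)) ^ 2 ≤ ε ^ 2
/-- The parabolic strip `Ω_ε = {x : x₁² ≤ x₂ ≤ x₁² + ε²}`. -/
def Omega (ε : ℝ) : Set (ℝ × ℝ) := {x | x.1 ^ 2 ≤ x.2 ∧ x.2 ≤ x.1 ^ 2 + ε ^ 2}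

/-- The upper Bellman function `B⁺_δ`. -/
noncomputable def Bp (δ : ℝ) (x : ℝ × ℝ) : ℝ :=
  (1 - Real.sqrt (δ ^ 2 + x.1 ^ 2 - x.2)) / (1 - δ) *
    Real.exp (x.1 + Real.sqrt (δ ^ 2 + x.1 ^ 2 - x.2) - δ)

/-- The lower Bellman function `B⁻_δ`. -/
noncomputable def Bm (δ : ℝ) (x : ℝ × ℝ) : ℝ :=
  (1 + Real.sqrt (δ ^ 2 + x.1 ^ 2 - x.2)) / (1 + δ) *
    Real.exp (x.1 - Real.sqrt (δ ^ 2 + x.1 ^ 2 - x.2) + δ)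
/-- The function `g(δ,ε)` whose root determines the sharp dyadic parameter `δ⁺(ε)`. -/
noncomputable def g (δ ε : ℝ) : ℝ :=
  (1 - Real.sqrt (δ ^ 2 - ε ^ 2)) * Real.exp (Real.sqrt (δ ^ 2 - ε ^ 2)) *
      (2 - Real.exp (ε / Real.sqrt 2)) -
    (1 - δ) * Real.exp (δ - ε / Real.sqrt 2)

lemma my_le_of_sq {x y : ℝ} (h : x ^ 2 ≤ y ^ 2) (hy : 0 ≤ y) : x ≤ y := le_trans (le_abs_self x) (abs_le_of_sq_le_sq h hy)

noncomputable def hh (s : ℝ) : ℝ := (1 - s) * Real.exp s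

lemma hh_deriv (s : ℝ) : HasDerivAt hh (-(s * Real.exp s)) s := by
  have h := ((hasDerivAt_const s (1:ℝ)).sub (hasDerivAt_id s)).mul (Real.hasDerivAt_exp s)
  refine (h.congr_deriv ?_)
  simp; ring

lemma hh_cont : Continuous hh := by unfold hh; fun_prop

lemma hh_anti {x y : ℝ} (hx : 0 ≤ x) (hxy : x ≤ y) : hh y ≤ hh x := by
  rcases hxy.eq_or_lt with rfl | hlt
  · exact le_rfl
  obtain ⟨c, hc, he⟩ := exists_hasDerivAt_eq_slope hh _ hlt hh_cont.continuousOn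
    (fun z _ => hh_deriv z)
  rw [eq_div_iff (by linarith)] at he
  have : 0 ≤ c * Real.exp c * (y - x) :=
    mul_nonneg (mul_nonneg (by linarith [hc.1]) (Real.exp_pos _).le) (by linarith)
  linarith

lemma hh_mono {x y : ℝ} (hy : y ≤ 0) (hxy : x ≤ y) : hh x ≤ hh y := by
  rcases hxy.eq_or_lt with rfl | hlt
  · exact le_rfl
  obtain ⟨c, hc, he⟩ := exists_hasDerivAt_eq_slope hh _ hlt hh_cont.continuousOn
    (fun z _ => hh_deriv z)
  rw [eq_div_iff (by linarith)] at he
  have : 0 ≤ (-c) * Real.exp c * (y - x) :=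
    mul_nonneg (mul_nonneg (by linarith [hc.2]) (Real.exp_pos _).le) (by linarith)
  linarith

lemma hh_tangent {t u : ℝ} (ht : 0 ≤ t) (hu : 0 ≤ u) :
    hh t ≤ hh u - Real.exp u * (t ^ 2 - u ^ 2) / 2 := by
  have hd : ∀ x, HasDerivAt (fun x => hh x + Real.exp u * x ^ 2 / 2)
      (x * (Real.exp u - Real.exp x)) x := by
    intro x
    have h := (hh_deriv x).add (((hasDerivAt_pow 2 x).const_mul (Real.exp u)).div_const 2)
    refine h.congr_deriv ?_
    simp; ring
  have hc : Continuous (fun x => hh x + Real.exp u * x ^ 2 / 2) := by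
    have := hh_cont
    fun_prop
  rcases lt_trichotomy t u with hlt | rfl | hlt
  · obtain ⟨c, hc, he⟩ := exists_hasDerivAt_eq_slope _ _ hlt hc.continuousOn (fun z _ => hd z)
    rw [eq_div_iff (by linarith)] at he
    have : 0 ≤ c * (Real.exp u - Real.exp c) * (u - t) :=
      mul_nonneg (mul_nonneg (by linarith [hc.1])
        (by linarith [Real.exp_le_exp.2 hc.2.le])) (by linarith)
    linarith
  · simp
  · obtain ⟨c, hc, he⟩ := exists_hasDerivAt_eq_slope _ _ hlt hc.continuousOn (fun z _ => hd z)
    rw [eq_div_iff (by linarith)] at he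
    have : 0 ≤ c * (Real.exp c - Real.exp u) * (t - u) :=
      mul_nonneg (mul_nonneg (by linarith [hc.1])
        (by linarith [Real.exp_le_exp.2 hc.1.le])) (by linarith)
    linarith

/-- A function whose derivative changes sign at most once, from + to -, is bounded below
by its endpoint values. -/
lemma unimod {F F' : ℝ → ℝ} {l r : ℝ} (hc : ContinuousOn F (Set.Icc l r))
    (hd : ∀ x ∈ Set.Ioo l r, HasDerivAt F (F' x) x)
    (hs : ∀ x ∈ Set.Ioo l r, ∀ y ∈ Set.Ioo l r, x < y → F' x < 0 → F' y ≤ 0)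
    (hl : 0 ≤ F l) (hr : 0 ≤ F r) {c : ℝ} (hcm : c ∈ Set.Icc l r) : 0 ≤ F c := by
  by_contra hneg
  push Not at hneg
  have h1 : l < c := lt_of_le_of_ne hcm.1 (by rintro rfl; linarith)
  have h2 : c < r := lt_of_le_of_ne hcm.2 (by rintro rfl; linarith)
  obtain ⟨x, hx, hxe⟩ := exists_hasDerivAt_eq_slope F F' h1
    (hc.mono (Set.Icc_subset_Icc le_rfl hcm.2)) (fun z hz => hd z ⟨hz.1, hz.2.trans h2⟩)
  obtain ⟨y, hy, hye⟩ := exists_hasDerivAt_eq_slope F F' h2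
    (hc.mono (Set.Icc_subset_Icc hcm.1 le_rfl)) (fun z hz => hd z ⟨h1.trans hz.1, hz.2⟩)
  have hx0 : F' x < 0 := by rw [hxe]; exact div_neg_of_neg_of_pos (by linarith) (by linarith)
  have hy0 : 0 < F' y := by rw [hye]; exact div_pos (by linarith) (by linarith)
  have := hs x ⟨hx.1, hx.2.trans h2⟩ y ⟨h1.trans hy.1, hy.2⟩ (hx.2.trans hy.1) hx0
  linarith

lemma case_small {s p m a : ℝ} (ha : 0 ≤ a) (has : a ≤ s) (hp : 0 ≤ p) (hm : 0 ≤ m)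
    (he : 2 * s ^ 2 + 2 * a ^ 2 = p ^ 2 + m ^ 2) :
    Real.exp a * hh p + Real.exp (-a) * hh m ≤ 2 * hh s := by
  have h1 := mul_le_mul_of_nonneg_left (hh_tangent hp (sub_nonneg.2 has)) (Real.exp_pos a).le
  have h2 := mul_le_mul_of_nonneg_left (hh_tangent hm (by linarith : 0 ≤ s + a))
    (Real.exp_pos (-a)).le
  have e1 : Real.exp a * Real.exp (s - a) = Real.exp s := by rw [← Real.exp_add]; congr 1; ring
  have e2 : Real.exp (-a) * Real.exp (s + a) = Real.exp s := by
    rw [← Real.exp_add]; congr 1; ring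
  have e3 : Real.exp a * (hh (s - a) - Real.exp (s - a) * (p ^ 2 - (s - a) ^ 2) / 2)
      = Real.exp s * ((1 - (s - a)) - (p ^ 2 - (s - a) ^ 2) / 2) := by
    rw [← e1]; unfold hh; ring
  have e4 : Real.exp (-a) * (hh (s + a) - Real.exp (s + a) * (m ^ 2 - (s + a) ^ 2) / 2)
      = Real.exp s * ((1 - (s + a)) - (m ^ 2 - (s + a) ^ 2) / 2) := by
    rw [← e2]; unfold hh; ring
  have e5 : Real.exp s * ((1 - (s - a)) - (p ^ 2 - (s - a) ^ 2) / 2) +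
      Real.exp s * ((1 - (s + a)) - (m ^ 2 - (s + a) ^ 2) / 2) = 2 * hh s := by
    unfold hh
    have : m ^ 2 = 2 * s ^ 2 + 2 * a ^ 2 - p ^ 2 := by linarith
    rw [this]; ring
  linarith

/-- `s = p = σ`, `m = √(σ² + 2a²)`. -/
lemma case_B1 {σ a0 : ℝ} (hσ : 0 < σ)
    (hg : 2 * hh σ = Real.exp a0 * hh σ + Real.exp (-a0) * hh (√(σ ^ 2 + 2 * a0 ^ 2)))
    {a : ℝ} (ha : 0 ≤ a) (haa : a ≤ a0) :
    Real.exp a * hh σ + Real.exp (-a) * hh (√(σ ^ 2 + 2 * a ^ 2)) ≤ 2 * hh σ := by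
  have hpos : ∀ x : ℝ, 0 < σ ^ 2 + 2 * x ^ 2 := fun x => by positivity
  have key := unimod (l := 0) (r := a0)
    (F := fun x => 2 * hh σ - Real.exp x * hh σ - Real.exp (-x) * hh (√(σ ^ 2 + 2 * x ^ 2)))
    (F' := fun x => Real.exp x * (hh (√(σ ^ 2 + 2 * x ^ 2) - 2 * x) - hh σ))
    (c := a) ?_ ?_ ?_ ?_ ?_ ⟨ha, haa⟩
  · linarith
  · have := hh_cont
    fun_prop
  · intro x hx
    have hq : HasDerivAt (fun x : ℝ => σ ^ 2 + 2 * x ^ 2) (4 * x) x := by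
      have := ((hasDerivAt_pow 2 x).const_mul 2).const_add (σ ^ 2)
      refine this.congr_deriv ?_
      simp; ring
    have hsq := hq.sqrt (hpos x).ne'
    have hhc := (hh_deriv (√(σ ^ 2 + 2 * x ^ 2))).comp x hsq
    have hen : HasDerivAt (fun x : ℝ => Real.exp (-x)) (-Real.exp (-x)) x := by
      have := (hasDerivAt_neg x).exp
      refine this.congr_deriv ?_
      simp
    have h := (((Real.hasDerivAt_exp x).mul_const (hh σ)).const_sub (2 * hh σ)).sub (hen.mul hhc)
    refine h.congr_deriv ?_
    have hs : 0 < √(σ ^ 2 + 2 * x ^ 2) := Real.sqrt_pos.2 (hpos x)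
    simp only [Function.comp]
    generalize √(σ ^ 2 + 2 * x ^ 2) = w at *
    have e1 : Real.exp x * Real.exp (w - 2 * x) = Real.exp (-x) * Real.exp w := by
      rw [← Real.exp_add, ← Real.exp_add]; congr 1; ring
    have e2 : Real.exp x * (hh (w - 2 * x) - hh σ) =
       Real.exp (-x) * Real.exp w * (1 - (w - 2 * x)) - Real.exp x * hh σ := by
      rw [← e1]; unfold hh; ring
    rw [e2]
    unfold hh
    field_simp
    ring
  · intro x hx y hy hxy h
    have h1 : hh (√(σ ^ 2 + 2 * x ^ 2) - 2 * x) - hh σ < 0 := by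
      by_contra hcon
      push Not at hcon
      have := mul_nonneg (Real.exp_pos x).le hcon
      linarith
    have hx0 := hx.1
    have hy0 := hy.1
    have hwx : √(σ ^ 2 + 2 * x ^ 2) - 2 * x ≤ σ := by
      have : √(σ ^ 2 + 2 * x ^ 2) ≤ σ + 2 * x := by
        apply Real.sqrt_le_iff.2
        constructor <;> nlinarith [mul_pos hσ hx0]
      linarith
    have hneg : √(σ ^ 2 + 2 * x ^ 2) - 2 * x < 0 := by
      by_contra hcon
      push Not at hcon
      linarith [hh_anti hcon hwx]
    have hmon : √(σ ^ 2 + 2 * y ^ 2) - 2 * y ≤ √(σ ^ 2 + 2 * x ^ 2) - 2 * x := by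
      have hwxx : x ≤ √(σ ^ 2 + 2 * x ^ 2) := Real.le_sqrt_of_sq_le (by nlinarith [sq_nonneg σ])
      have : √(σ ^ 2 + 2 * y ^ 2) ≤ √(σ ^ 2 + 2 * x ^ 2) + 2 * (y - x) := by
        apply Real.sqrt_le_iff.2
        constructor
        · linarith
        · have hw2 := Real.sq_sqrt (hpos x).le
          nlinarith [mul_le_mul_of_nonneg_left hwxx (sub_nonneg.2 hxy.le),
            mul_pos (sub_pos.2 hxy) (sub_pos.2 hxy)]
      linarith
    have := hh_mono hneg.le hmon
    exact mul_nonpos_of_nonneg_of_nonpos (Real.exp_pos y).le (by linarith)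
  · rw [show σ ^ 2 + 2 * (0:ℝ) ^ 2 = σ ^ 2 by ring, Real.sqrt_sq hσ.le]
    simp; linarith
  · linarith

/-- `s = σ`, `m = δ`, `a ≥ a0`. -/
lemma case_i {σ δ a0 : ℝ} (hσ : 0 < σ) (ha0 : 0 ≤ a0)
    (hδ0 : 0 < δ) (hδ : δ ^ 2 = σ ^ 2 + 2 * a0 ^ 2)
    (hg : 2 * hh σ = Real.exp a0 * hh σ + Real.exp (-a0) * hh δ)
    {a : ℝ} (haa : a0 ≤ a) :
    Real.exp a * hh (√(σ ^ 2 + 2 * a ^ 2 - 2 * a0 ^ 2)) + Real.exp (-a) * hh δ ≤ 2 * hh σ := by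
  rcases haa.eq_or_lt with rfl | hlt
  · rw [show σ ^ 2 + 2 * a0 ^ 2 - 2 * a0 ^ 2 = σ ^ 2 by ring, Real.sqrt_sq hσ.le]
    exact hg.ge
  have hpos : ∀ x : ℝ, a0 < x → σ ^ 2 < σ ^ 2 + 2 * x ^ 2 - 2 * a0 ^ 2 := fun x hx => by
    nlinarith
  obtain ⟨x, hx, he⟩ := exists_hasDerivAt_eq_slope
    (fun x => Real.exp x * hh (√(σ ^ 2 + 2 * x ^ 2 - 2 * a0 ^ 2)) + Real.exp (-x) * hh δ)
    (fun x => Real.exp (-x) * (hh (√(σ ^ 2 + 2 * x ^ 2 - 2 * a0 ^ 2) + 2 * x) - hh δ)) hlt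
    (by
      have := hh_cont
      fun_prop)
    (by
      intro x hx
      have hq : HasDerivAt (fun x : ℝ => σ ^ 2 + 2 * x ^ 2 - 2 * a0 ^ 2) (4 * x) x := by
        have := (((hasDerivAt_pow 2 x).const_mul 2).const_add (σ ^ 2)).sub_const (2 * a0 ^ 2)
        refine this.congr_deriv ?_
        simp; ring
      have hp : 0 < σ ^ 2 + 2 * x ^ 2 - 2 * a0 ^ 2 := (by positivity : 0 ≤ σ ^ 2).trans_lt (hpos x hx.1)
      have hsq := hq.sqrt hp.ne'
      have hhc := (hh_deriv (√(σ ^ 2 + 2 * x ^ 2 - 2 * a0 ^ 2))).comp x hsq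
      have hen : HasDerivAt (fun x : ℝ => Real.exp (-x)) (-Real.exp (-x)) x := by
        have := (hasDerivAt_neg x).exp
        refine this.congr_deriv ?_
        simp
      have h := ((Real.hasDerivAt_exp x).mul hhc).add (hen.mul_const (hh δ))
      refine h.congr_deriv ?_
      have hs := Real.sqrt_pos.2 hp
      simp only [Function.comp]
      generalize √(σ ^ 2 + 2 * x ^ 2 - 2 * a0 ^ 2) = w at *
      have e1 : Real.exp (-x) * Real.exp (w + 2 * x) = Real.exp x * Real.exp w := by
        rw [← Real.exp_add, ← Real.exp_add]; congr 1; ring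
      have e2 : Real.exp (-x) * (hh (w + 2 * x) - hh δ) =
        Real.exp x * Real.exp w * (1 - (w + 2 * x)) - Real.exp (-x) * hh δ := by
        rw [← e1]; unfold hh; ring
      rw [e2]
      unfold hh
      field_simp
      ring)
  rw [eq_div_iff (by linarith)] at he
  have hxp : 0 ≤ x := ha0.trans hx.1.le
  have hle : δ ≤ √(σ ^ 2 + 2 * x ^ 2 - 2 * a0 ^ 2) + 2 * x := by
    have : σ ≤ √(σ ^ 2 + 2 * x ^ 2 - 2 * a0 ^ 2) := Real.le_sqrt_of_sq_le (hpos x hx.1).le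
    have h2 : δ ≤ σ + 2 * x := by
      apply my_le_of_sq _ (by linarith)
      nlinarith [hx.1, mul_nonneg hσ.le hxp]
    linarith
  have h3 := hh_anti hδ0.le hle
  have h4 : Real.exp (-x) * (hh (√(σ ^ 2 + 2 * x ^ 2 - 2 * a0 ^ 2) + 2 * x) - hh δ) * (a - a0) ≤ 0 :=
    mul_nonpos_of_nonpos_of_nonneg
      (mul_nonpos_of_nonneg_of_nonpos (Real.exp_pos _).le (by linarith)) (by linarith)
  rw [show σ ^ 2 + 2 * a0 ^ 2 - 2 * a0 ^ 2 = σ ^ 2 by ring, Real.sqrt_sq hσ.le] at he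
  linarith

/-- `p = σ`, `m = δ`, `s ≤ a ≤ a0`. -/
lemma case_ii {σ δ a0 : ℝ} (hσ : 0 < σ)
    (hδ0 : 0 < δ) (hδ : δ ^ 2 = σ ^ 2 + 2 * a0 ^ 2)
    (hg : 2 * hh σ = Real.exp a0 * hh σ + Real.exp (-a0) * hh δ)
    {a s : ℝ} (ha : 0 ≤ a) (hs : σ ≤ s) (hsa : s ≤ a) (ha0 : 0 ≤ a0)
    (he : s ^ 2 + a ^ 2 = σ ^ 2 + a0 ^ 2) :
    Real.exp a * hh σ + Real.exp (-a) * hh δ ≤ 2 * hh s := by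
  have haa : a ≤ a0 := my_le_of_sq (by nlinarith) ha0
  set l := √((σ ^ 2 + a0 ^ 2) / 2) with hl
  have hl0 : 0 < l := Real.sqrt_pos.2 (by positivity)
  have hl2 : l ^ 2 = (σ ^ 2 + a0 ^ 2) / 2 := Real.sq_sqrt (by positivity)
  have hla : l ≤ a := my_le_of_sq (by nlinarith) ha
  have hmul : ∀ x w z : ℝ, Real.exp x * hh σ + Real.exp (-x) * z ≤ 2 * w ↔
      0 ≤ 2 * Real.exp x * w - hh σ * Real.exp (2 * x) - z := by
    intro x w z
    have e1 : Real.exp x * Real.exp (-x) = 1 := by rw [← Real.exp_add]; simp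
    have e2 : Real.exp (2 * x) = Real.exp x * Real.exp x := by rw [← Real.exp_add]; congr 1; ring
    have e3 : 2 * Real.exp x * w - hh σ * Real.exp (2 * x) - z =
      Real.exp x * (2 * w - (Real.exp x * hh σ + Real.exp (-x) * z)) := by
      rw [e2]; linear_combination z * e1
    rw [e3]
    constructor
    · intro h; exact mul_nonneg (Real.exp_pos _).le (by linarith)
    · intro h; have := nonneg_of_mul_nonneg_right h (Real.exp_pos _); linarith
  have hss : s = √(σ ^ 2 + a0 ^ 2 - a ^ 2) := by
    rw [show σ ^ 2 + a0 ^ 2 - a ^ 2 = s ^ 2 by linarith, Real.sqrt_sq (by linarith)]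
  rw [hmul, hss]
  refine unimod (l := l) (r := a0)
    (F := fun x => 2 * Real.exp x * hh (√(σ ^ 2 + a0 ^ 2 - x ^ 2)) - hh σ * Real.exp (2 * x) - hh δ)
    (F' := fun x => 2 * Real.exp (2 * x) * (hh (√(σ ^ 2 + a0 ^ 2 - x ^ 2) - x) - hh σ))
    (c := a) ?_ ?_ ?_ ?_ ?_ ⟨hla, haa⟩
  · have := hh_cont
    fun_prop
  · intro x hx
    have hx0 : 0 < x := hl0.trans hx.1
    have hp : 0 < σ ^ 2 + a0 ^ 2 - x ^ 2 := by nlinarith [hx.2]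
    have hq : HasDerivAt (fun x : ℝ => σ ^ 2 + a0 ^ 2 - x ^ 2) (-(2 * x)) x := by
      have := ((hasDerivAt_pow 2 x)).const_sub (σ ^ 2 + a0 ^ 2)
      refine this.congr_deriv ?_
      simp
    have hsq := hq.sqrt hp.ne'
    have hhc := (hh_deriv (√(σ ^ 2 + a0 ^ 2 - x ^ 2))).comp x hsq
    have hen : HasDerivAt (fun x : ℝ => Real.exp (2 * x)) (2 * Real.exp (2 * x)) x := by
      have := ((hasDerivAt_id x).const_mul 2).exp
      refine this.congr_deriv ?_
      simp; ring
    have h := ((((Real.hasDerivAt_exp x).const_mul 2).mul hhc).sub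
      (hen.const_mul (hh σ))).sub_const (hh δ)
    refine h.congr_deriv ?_
    have hs := Real.sqrt_pos.2 hp
    simp only [Function.comp]
    generalize √(σ ^ 2 + a0 ^ 2 - x ^ 2) = w at *
    have e1 : Real.exp (2 * x) * Real.exp (w - x) = Real.exp x * Real.exp w := by
      rw [← Real.exp_add, ← Real.exp_add]; congr 1; ring
    have e2 : 2 * Real.exp (2 * x) * (hh (w - x) - hh σ) =
      2 * (Real.exp x * Real.exp w) * (1 - (w - x)) - 2 * Real.exp (2 * x) * hh σ := by
      rw [← e1]; unfold hh; ring
    rw [e2]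
    unfold hh
    field_simp
    ring
  · intro x hx y hy hxy h
    have hx0 : 0 < x := hl0.trans hx.1
    have h1 : hh (√(σ ^ 2 + a0 ^ 2 - x ^ 2) - x) - hh σ < 0 := by
      by_contra hcon
      push Not at hcon
      have := mul_nonneg (mul_nonneg zero_le_two (Real.exp_pos (2 * x)).le) hcon
      linarith
    have h2 : √(σ ^ 2 + a0 ^ 2 - x ^ 2) ≤ x :=
      Real.sqrt_le_iff.2 ⟨hx0.le, by nlinarith [hx.1]⟩
    have h3 : √(σ ^ 2 + a0 ^ 2 - y ^ 2) ≤ √(σ ^ 2 + a0 ^ 2 - x ^ 2) :=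
      Real.sqrt_le_sqrt (by nlinarith)
    have := hh_mono (by linarith : √(σ ^ 2 + a0 ^ 2 - x ^ 2) - x ≤ 0)
      (by linarith : √(σ ^ 2 + a0 ^ 2 - y ^ 2) - y ≤ √(σ ^ 2 + a0 ^ 2 - x ^ 2) - x)
    exact mul_nonpos_of_nonneg_of_nonpos (by positivity) (by linarith)
  · rw [← hmul, show σ ^ 2 + a0 ^ 2 - l ^ 2 = l ^ 2 by linarith, Real.sqrt_sq hl0.le]
    exact case_small hl0.le le_rfl hσ.le hδ0.le (by linarith)
  · rw [← hmul, show σ ^ 2 + a0 ^ 2 - a0 ^ 2 = σ ^ 2 by ring, Real.sqrt_sq hσ.le]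
    exact hg.ge

/-- `p = σ`, `a ≥ s`. -/
lemma case_B2 {σ δ a0 : ℝ} (hσ : 0 < σ)
    (hδ0 : 0 < δ) (hδ : δ ^ 2 = σ ^ 2 + 2 * a0 ^ 2)
    (hg : 2 * hh σ = Real.exp a0 * hh σ + Real.exp (-a0) * hh δ)
    {a s m : ℝ} (ha : 0 ≤ a) (hs : σ ≤ s) (hsa : s ≤ a) (ha0 : 0 ≤ a0)
    (hm : 0 ≤ m) (hmδ : m ≤ δ)
    (he : 2 * s ^ 2 + 2 * a ^ 2 = σ ^ 2 + m ^ 2) :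
    Real.exp a * hh σ + Real.exp (-a) * hh m ≤ 2 * hh s := by
  have hmm : m ^ 2 ≤ δ ^ 2 := by nlinarith
  have haa : a ≤ a0 := my_le_of_sq (by nlinarith) ha0
  have hσa : σ ≤ a := hs.trans hsa
  set r := √(min (a ^ 2) (σ ^ 2 + a0 ^ 2 - a ^ 2)) with hr
  have hmin : s ^ 2 ≤ min (a ^ 2) (σ ^ 2 + a0 ^ 2 - a ^ 2) := le_min (by nlinarith) (by nlinarith)
  have hr2 : r ^ 2 = min (a ^ 2) (σ ^ 2 + a0 ^ 2 - a ^ 2) :=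
    Real.sq_sqrt ((sq_nonneg s).trans hmin)
  have hsr : s ≤ r := Real.le_sqrt_of_sq_le hmin
  have hra : r ≤ a := my_le_of_sq (hr2.trans_le (min_le_left _ _)) ha
  have hme : m = √(2 * s ^ 2 + 2 * a ^ 2 - σ ^ 2) := by
    rw [show 2 * s ^ 2 + 2 * a ^ 2 - σ ^ 2 = m ^ 2 by linarith, Real.sqrt_sq hm]
  have hpos : ∀ x, σ ≤ x → 0 < 2 * x ^ 2 + 2 * a ^ 2 - σ ^ 2 := fun x hx => by nlinarith
  have key := unimod (l := σ) (r := r)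
    (F := fun x => 2 * hh x - Real.exp a * hh σ - Real.exp (-a) * hh (√(2 * x ^ 2 + 2 * a ^ 2 - σ ^ 2)))
    (F' := fun x => 2 * x * (Real.exp (√(2 * x ^ 2 + 2 * a ^ 2 - σ ^ 2) - a) - Real.exp x))
    (c := s) ?_ ?_ ?_ ?_ ?_ ⟨hs, hsr⟩
  · simp only [← hme] at key; linarith
  · have := hh_cont
    fun_prop
  · intro x hx
    have hp := hpos x hx.1.le
    have hq : HasDerivAt (fun x : ℝ => 2 * x ^ 2 + 2 * a ^ 2 - σ ^ 2) (4 * x) x := by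
      have := (((hasDerivAt_pow 2 x).const_mul 2).add_const (2 * a ^ 2)).sub_const (σ ^ 2)
      refine this.congr_deriv ?_
      simp; ring
    have hsq := hq.sqrt hp.ne'
    have hhc := (hh_deriv (√(2 * x ^ 2 + 2 * a ^ 2 - σ ^ 2))).comp x hsq
    have h := (((hh_deriv x).const_mul 2).sub_const (Real.exp a * hh σ)).sub
      (hhc.const_mul (Real.exp (-a)))
    refine h.congr_deriv ?_
    have hs := Real.sqrt_pos.2 hp
    generalize √(2 * x ^ 2 + 2 * a ^ 2 - σ ^ 2) = w at *
    rw [sub_eq_add_neg w a, Real.exp_add]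
    field_simp
    ring
  · intro x hx y hy hxy h
    have hx0 : 0 < x := hσ.trans hx.1
    have hy0 : 0 < y := hσ.trans hy.1
    have h1 : √(2 * x ^ 2 + 2 * a ^ 2 - σ ^ 2) - a < x := by
      by_contra hcon
      push Not at hcon
      have := mul_nonneg (mul_nonneg zero_le_two hx0.le) (sub_nonneg.2 (Real.exp_le_exp.2 hcon))
      linarith
    have h2 : 2 * x ^ 2 + 2 * a ^ 2 - σ ^ 2 < (x + a) ^ 2 := by
      have := Real.sq_sqrt (hpos x hx.1.le).le
      nlinarith [Real.sqrt_nonneg (2 * x ^ 2 + 2 * a ^ 2 - σ ^ 2)]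
    have h3 : a - x < σ := lt_of_pow_lt_pow_left₀ 2 hσ.le (by nlinarith)
    have h4 : √(2 * y ^ 2 + 2 * a ^ 2 - σ ^ 2) ≤ y + a := by
      apply Real.sqrt_le_iff.2 ⟨by linarith, _⟩
      nlinarith [hy.2]
    exact mul_nonpos_of_nonneg_of_nonpos (by positivity)
      (sub_nonpos.2 (Real.exp_le_exp.2 (by linarith)))
  · have hδe : δ = √(σ ^ 2 + 2 * a0 ^ 2) := by rw [← hδ, Real.sqrt_sq hδ0.le]
    have := case_B1 hσ (hδe ▸ hg) ha haa
    rw [show 2 * σ ^ 2 + 2 * a ^ 2 - σ ^ 2 = σ ^ 2 + 2 * a ^ 2 by ring]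
    linarith
  · rcases le_total (a ^ 2) (σ ^ 2 + a0 ^ 2 - a ^ 2) with hc | hc
    · rw [min_eq_left hc] at hr2
      have hrae : r = a := by rw [hr, min_eq_left hc, Real.sqrt_sq ha]
      have := case_small (s := r) (p := σ) (m := √(2 * r ^ 2 + 2 * a ^ 2 - σ ^ 2)) ha hrae.ge
        hσ.le (Real.sqrt_nonneg _) (by rw [Real.sq_sqrt (hpos r (hs.trans hsr)).le]; ring)
      linarith
    · rw [min_eq_right hc] at hr2
      rw [show 2 * r ^ 2 + 2 * a ^ 2 - σ ^ 2 = δ ^ 2 by rw [hr2, hδ]; ring, Real.sqrt_sq hδ0.le]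
      have := case_ii hσ hδ0 hδ hg ha (hs.trans hsr) hra ha0 (by rw [hr2]; ring)
      linarith

/-- `m = δ`, `a ≥ s`. -/
lemma case_A {σ δ a0 : ℝ} (hσ : 0 < σ)
    (hδ0 : 0 < δ) (hδ : δ ^ 2 = σ ^ 2 + 2 * a0 ^ 2)
    (hg : 2 * hh σ = Real.exp a0 * hh σ + Real.exp (-a0) * hh δ)
    {a s p : ℝ} (ha : 0 ≤ a) (hs : σ ≤ s) (hsa : s ≤ a) (ha0 : 0 ≤ a0)
    (hp : σ ≤ p)
    (he : 2 * s ^ 2 + 2 * a ^ 2 = p ^ 2 + δ ^ 2) :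
    Real.exp a * hh p + Real.exp (-a) * hh δ ≤ 2 * hh s := by
  -- move down by η
  have move : ∀ η s' p' : ℝ, 0 ≤ η → 0 ≤ s' → 0 ≤ p' → s' ^ 2 = s ^ 2 - η → p' ^ 2 = p ^ 2 - 2 * η →
      Real.exp a * hh p' + Real.exp (-a) * hh δ ≤ 2 * hh s' →
      Real.exp a * hh p + Real.exp (-a) * hh δ ≤ 2 * hh s := by
    intro η s' p' hη hs' hp' e1 e2 h
    have t1 := hh_tangent hs' (hσ.le.trans hs)
    have t2 := hh_tangent (hσ.le.trans hp) hp'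
    rw [show s' ^ 2 - s ^ 2 = - η by linarith] at t1
    rw [show p ^ 2 - p' ^ 2 = 2 * η by linarith] at t2
    have t3 := mul_le_mul_of_nonneg_left t2 (Real.exp_pos a).le
    have t4 : Real.exp s ≤ Real.exp a * Real.exp p' := by
      rw [← Real.exp_add]; exact Real.exp_le_exp.2 (by linarith)
    have t5 := mul_le_mul_of_nonneg_right t4 hη
    nlinarith
  rcases le_total (s ^ 2 - σ ^ 2) ((p ^ 2 - σ ^ 2) / 2) with hc | hc
  · have hle : σ ^ 2 ≤ p ^ 2 - 2 * (s ^ 2 - σ ^ 2) := by linarith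
    have hle0 : 0 ≤ p ^ 2 - 2 * (s ^ 2 - σ ^ 2) := (sq_nonneg σ).trans hle
    refine move (s ^ 2 - σ ^ 2) σ (√(p ^ 2 - 2 * (s ^ 2 - σ ^ 2))) (by nlinarith) hσ.le
      (Real.sqrt_nonneg _) (by ring) (Real.sq_sqrt hle0) ?_
    have := case_i hσ ha0 hδ0 hδ hg (a := a) (my_le_of_sq (by linarith) ha)
    rwa [show p ^ 2 - 2 * (s ^ 2 - σ ^ 2) = σ ^ 2 + 2 * a ^ 2 - 2 * a0 ^ 2 by linarith]
  · have hle : σ ^ 2 ≤ s ^ 2 - (p ^ 2 - σ ^ 2) / 2 := by linarith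
    have hle0 : 0 ≤ s ^ 2 - (p ^ 2 - σ ^ 2) / 2 := (sq_nonneg σ).trans hle
    have hη : 0 ≤ (p ^ 2 - σ ^ 2) / 2 := by nlinarith
    refine move ((p ^ 2 - σ ^ 2) / 2) (√(s ^ 2 - (p ^ 2 - σ ^ 2) / 2)) σ hη
      (Real.sqrt_nonneg _) hσ.le (Real.sq_sqrt hle0) (by ring) ?_
    refine case_ii hσ hδ0 hδ hg ha (Real.le_sqrt_of_sq_le hle) ?_ ha0 ?_
    · refine (Real.sqrt_le_sqrt (by linarith : _ ≤ s ^ 2)).trans ?_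
      rwa [Real.sqrt_sq (hσ.le.trans hs)]
    · rw [Real.sq_sqrt hle0]; linarith

lemma key_ineq {σ δ a0 : ℝ} (hσ : 0 < σ)
    (hδ0 : 0 < δ) (hδ : δ ^ 2 = σ ^ 2 + 2 * a0 ^ 2) (ha0 : 0 ≤ a0)
    (hg : 2 * hh σ = Real.exp a0 * hh σ + Real.exp (-a0) * hh δ)
    {a s p m : ℝ} (ha : 0 ≤ a) (hs : σ ≤ s) (hp : σ ≤ p) (hm : σ ≤ m) (hmδ : m ≤ δ)
    (he : 2 * s ^ 2 + 2 * a ^ 2 = p ^ 2 + m ^ 2) :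
    Real.exp a * hh p + Real.exp (-a) * hh m ≤ 2 * hh s := by
  rcases le_total a s with has | hsa
  · exact case_small ha has (hσ.le.trans hp) (hσ.le.trans hm) he
  have move : ∀ η p' m' : ℝ, 0 ≤ η → 0 ≤ p' → 0 ≤ m' → p' ^ 2 = p ^ 2 - η → m' ^ 2 = m ^ 2 + η →
      Real.exp a * hh p' + Real.exp (-a) * hh m' ≤ 2 * hh s →
      Real.exp a * hh p + Real.exp (-a) * hh m ≤ 2 * hh s := by
    intro η p' m' hη hp' hm' e1 e2 h
    have t1 := hh_tangent (hσ.le.trans hp) hp'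
    have t2 := hh_tangent (hσ.le.trans hm) hm'
    rw [show p ^ 2 - p' ^ 2 = η by linarith] at t1
    rw [show m ^ 2 - m' ^ 2 = -η by linarith] at t2
    have t3 := mul_le_mul_of_nonneg_left t1 (Real.exp_pos a).le
    have t3' := mul_le_mul_of_nonneg_left t2 (Real.exp_pos (-a)).le
    have hm2 : m' ≤ 2 * a := my_le_of_sq (by nlinarith) (by linarith)
    have t4 : Real.exp (-a) * Real.exp m' ≤ Real.exp a * Real.exp p' := by
      rw [← Real.exp_add, ← Real.exp_add]; exact Real.exp_le_exp.2 (by linarith)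
    have t5 := mul_le_mul_of_nonneg_right t4 hη
    nlinarith
  rcases le_total (p ^ 2 - σ ^ 2) (δ ^ 2 - m ^ 2) with hc | hc
  · have h0 : 0 ≤ p ^ 2 - σ ^ 2 := by nlinarith
    have h1 : 0 ≤ m ^ 2 + (p ^ 2 - σ ^ 2) := by positivity
    refine move (p ^ 2 - σ ^ 2) σ (√(m ^ 2 + (p ^ 2 - σ ^ 2))) h0 hσ.le (Real.sqrt_nonneg _)
      (by ring) (Real.sq_sqrt h1) ?_
    refine case_B2 hσ hδ0 hδ hg ha hs hsa ha0 (Real.sqrt_nonneg _) ?_ ?_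
    · exact Real.sqrt_le_iff.2 ⟨hδ0.le, by linarith⟩
    · rw [Real.sq_sqrt h1]; linarith
  · have h0 : 0 ≤ δ ^ 2 - m ^ 2 := by nlinarith
    have h1 : σ ^ 2 ≤ p ^ 2 - (δ ^ 2 - m ^ 2) := by linarith
    have h2 : 0 ≤ p ^ 2 - (δ ^ 2 - m ^ 2) := (sq_nonneg σ).trans h1
    refine move (δ ^ 2 - m ^ 2) (√(p ^ 2 - (δ ^ 2 - m ^ 2))) δ h0 (Real.sqrt_nonneg _) hδ0.le
      (Real.sq_sqrt h2) (by ring) ?_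
    refine case_A hσ hδ0 hδ hg ha hs hsa ha0 (Real.le_sqrt_of_sq_le h1) ?_
    rw [Real.sq_sqrt h2]; linarith

lemma Bp_eq (δ : ℝ) (x : ℝ × ℝ) :
    Bp δ x = Real.exp (-δ) / (1 - δ) * (Real.exp x.1 * hh (√(δ ^ 2 + x.1 ^ 2 - x.2))) := by
  unfold Bp hh
  rw [show x.1 + √(δ ^ 2 + x.1 ^ 2 - x.2) - δ = -δ + (x.1 + √(δ ^ 2 + x.1 ^ 2 - x.2)) by ring,
    Real.exp_add, Real.exp_add]
  ring

lemma Bp_ge {δ : ℝ} (hδ0 : 0 < δ) (hδ1 : δ < 1) {x : ℝ × ℝ} (hx : x.1 ^ 2 ≤ x.2) :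
    Real.exp x.1 ≤ Bp δ x := by
  rw [Bp_eq]
  have h1 : √(δ ^ 2 + x.1 ^ 2 - x.2) ≤ δ := Real.sqrt_le_iff.2 ⟨hδ0.le, by linarith⟩
  have h2 := hh_anti (Real.sqrt_nonneg _) h1
  have h3 : Real.exp (-δ) / (1 - δ) * hh δ = 1 := by
    unfold hh
    have : Real.exp (-δ) * Real.exp δ = 1 := by rw [← Real.exp_add]; simp
    have h4 : (1 - δ) ≠ 0 := by linarith
    field_simp
    linarith
  have hC : 0 < Real.exp (-δ) / (1 - δ) := div_pos (Real.exp_pos _) (by linarith)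
  have h5 := mul_le_mul_of_nonneg_left h2 hC.le
  rw [h3] at h5
  calc Real.exp x.1 = Real.exp x.1 * 1 := by ring
    _ ≤ Real.exp x.1 * (Real.exp (-δ) / (1 - δ) * hh (√(δ ^ 2 + x.1 ^ 2 - x.2))) :=
      mul_le_mul_of_nonneg_left h5 (Real.exp_pos _).le
    _ = _ := by ring

lemma Bp_mid {ε δ : ℝ} (hε0 : 0 < ε) (hδ : δ ∈ Set.Ioo ε 1) (hg : g δ ε = 0)
    {x y z : ℝ × ℝ} (hx : x.2 ≤ x.1 ^ 2 + ε ^ 2)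
    (hy : y.1 ^ 2 ≤ y.2) (hy' : y.2 ≤ y.1 ^ 2 + ε ^ 2)
    (hz : z.1 ^ 2 ≤ z.2) (hz' : z.2 ≤ z.1 ^ 2 + ε ^ 2)
    (h1 : 2 * x.1 = y.1 + z.1) (h2 : 2 * x.2 = y.2 + z.2) :
    Bp δ y + Bp δ z ≤ 2 * Bp δ x := by
  wlog hyz : z.1 ≤ y.1 generalizing y z
  · have := this hz hz' hy hy' (by linarith) (by linarith) (by linarith)
    linarith
  have hδε := hδ.1
  have hδ1 := hδ.2
  have hδ0 : 0 < δ := hε0.trans hδε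
  have hσ2 : 0 < δ ^ 2 - ε ^ 2 := by nlinarith
  have hσ : 0 < √(δ ^ 2 - ε ^ 2) := Real.sqrt_pos.2 hσ2
  have hσs := Real.sq_sqrt hσ2.le
  have ha0 : 0 ≤ ε / √2 := by positivity
  have ha0s : 2 * (ε / √2) ^ 2 = ε ^ 2 := by
    rw [div_pow, Real.sq_sqrt zero_le_two]; ring
  have hg' : 2 * hh (√(δ ^ 2 - ε ^ 2)) = Real.exp (ε / √2) * hh (√(δ ^ 2 - ε ^ 2)) +
      Real.exp (-(ε / √2)) * hh δ := by
    unfold g at hg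
    rw [sub_eq_add_neg δ, Real.exp_add] at hg
    unfold hh
    linarith
  have px : δ ^ 2 - ε ^ 2 ≤ δ ^ 2 + x.1 ^ 2 - x.2 := by linarith
  have py : δ ^ 2 - ε ^ 2 ≤ δ ^ 2 + y.1 ^ 2 - y.2 := by linarith
  have pz : δ ^ 2 - ε ^ 2 ≤ δ ^ 2 + z.1 ^ 2 - z.2 := by linarith
  have key := key_ineq hσ hδ0 (by rw [hσs, ha0s]; ring) ha0 hg'
    (a := (y.1 - z.1) / 2) (s := √(δ ^ 2 + x.1 ^ 2 - x.2)) (p := √(δ ^ 2 + y.1 ^ 2 - y.2))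
    (m := √(δ ^ 2 + z.1 ^ 2 - z.2)) (by linarith) (Real.sqrt_le_sqrt px) (Real.sqrt_le_sqrt py)
    (Real.sqrt_le_sqrt pz) (Real.sqrt_le_iff.2 ⟨hδ0.le, by linarith⟩) (by
      rw [Real.sq_sqrt (hσ2.le.trans px), Real.sq_sqrt (hσ2.le.trans py),
        Real.sq_sqrt (hσ2.le.trans pz)]
      have : x.1 = (y.1 + z.1) / 2 := by linarith
      rw [this]
      linear_combination - h2)
  simp only [Bp_eq]
  have hC : 0 < Real.exp (-δ) / (1 - δ) := div_pos (Real.exp_pos _) (by linarith)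
  have k2 := mul_le_mul_of_nonneg_left key (mul_pos hC (Real.exp_pos x.1)).le
  have e1 : Real.exp y.1 = Real.exp x.1 * Real.exp ((y.1 - z.1) / 2) := by
    rw [← Real.exp_add]; congr 1; linarith
  have e2 : Real.exp z.1 = Real.exp x.1 * Real.exp (-((y.1 - z.1) / 2)) := by
    rw [← Real.exp_add]; congr 1; linarith
  rw [e1, e2]
  linarith

lemma sum_range_two_mul_pair (f : ℕ → ℝ) (m : ℕ) :
    ∑ j ∈ Finset.range (2 * m), f j = ∑ k ∈ Finset.range m, (f (2 * k) + f (2 * k + 1)) := by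
  induction m with
  | zero => simp
  | succ m ih =>
    rw [show 2 * (m + 1) = 2 * m + 1 + 1 by ring, Finset.sum_range_succ, Finset.sum_range_succ, ih,
      Finset.sum_range_succ]
    ring

/-- dyadic average -/
noncomputable def dav (f : ℝ → ℝ) (n k : ℕ) : ℝ := avg f ((k : ℝ) / 2 ^ n) (((k : ℝ) + 1) / 2 ^ n)

lemma dav_eq (f : ℝ → ℝ) (n k : ℕ) :
    dav f n k = 2 ^ n * ∫ t in ((k : ℝ) / 2 ^ n)..(((k : ℝ) + 1) / 2 ^ n), f t := by
  unfold dav avg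
  rw [← sub_div, div_div_eq_mul_div]
  simp; ring

lemma dy_sub {n k : ℕ} (hk : k < 2 ^ n) :
    Set.uIcc ((k : ℝ) / 2 ^ n) (((k : ℝ) + 1) / 2 ^ n) ⊆ Set.uIcc (0:ℝ) 1 := by
  have h2 : (0:ℝ) < 2 ^ n := by positivity
  have hk' : (k : ℝ) + 1 ≤ 2 ^ n := by exact_mod_cast hk
  rw [Set.uIcc_of_le (by gcongr; linarith), Set.uIcc_of_le zero_le_one]
  apply Set.Icc_subset_Icc
  · positivity
  · rw [div_le_one h2]; exact hk'

lemma dav_split {f : ℝ → ℝ} (hf : IntervalIntegrable f volume 0 1) {n k : ℕ} (hk : k < 2 ^ n) :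
    2 * dav f n k = dav f (n + 1) (2 * k) + dav f (n + 1) (2 * k + 1) := by
  have hk1 : 2 * k < 2 ^ (n + 1) := by rw [pow_succ]; omega
  have hk2 : 2 * k + 1 < 2 ^ (n + 1) := by rw [pow_succ]; omega
  have i1 := hf.mono_set (dy_sub hk1)
  have i2 := hf.mono_set (dy_sub hk2)
  have e0 : ((2 * k : ℕ) : ℝ) / 2 ^ (n + 1) = (k : ℝ) / 2 ^ n := by
    push_cast; rw [pow_succ]; field_simp
  have e1 : ((2 * k + 1 : ℕ) : ℝ) / 2 ^ (n + 1) = (((2 * k : ℕ) : ℝ) + 1) / 2 ^ (n + 1) := by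
    push_cast; rfl
  have e2 : (((2 * k + 1 : ℕ) : ℝ) + 1) / 2 ^ (n + 1) = ((k : ℝ) + 1) / 2 ^ n := by
    push_cast; rw [pow_succ]; field_simp; ring
  rw [e1] at i2
  have := intervalIntegral.integral_add_adjacent_intervals i1 i2
  rw [dav_eq, dav_eq, dav_eq, e1, ← mul_add, this, e0, e2, pow_succ]
  ring

lemma dav_sq_le {f : ℝ → ℝ} (hf : IntervalIntegrable f volume 0 1)
    (hf2 : IntervalIntegrable (fun t => (f t) ^ 2) volume 0 1) {n k : ℕ} (hk : k < 2 ^ n) :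
    (dav f n k) ^ 2 ≤ dav (fun t => (f t) ^ 2) n k := by
  have i1 := hf.mono_set (dy_sub hk)
  have i2 := hf2.mono_set (dy_sub hk)
  set c := dav f n k with hc
  have hle : (k : ℝ) / 2 ^ n ≤ ((k : ℝ) + 1) / 2 ^ n := by gcongr; linarith
  have h0 : 0 ≤ ∫ t in ((k : ℝ) / 2 ^ n)..(((k : ℝ) + 1) / 2 ^ n), (f t - c) ^ 2 :=
    intervalIntegral.integral_nonneg hle (fun t _ => sq_nonneg _)
  have e : ∫ t in ((k : ℝ) / 2 ^ n)..(((k : ℝ) + 1) / 2 ^ n), (f t - c) ^ 2 =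
      (∫ t in ((k : ℝ) / 2 ^ n)..(((k : ℝ) + 1) / 2 ^ n), (f t) ^ 2)
      - 2 * c * (∫ t in ((k : ℝ) / 2 ^ n)..(((k : ℝ) + 1) / 2 ^ n), f t) + c ^ 2 / 2 ^ n := by
    have : (fun t => (f t - c) ^ 2) = fun t => ((f t) ^ 2 - 2 * c * f t) + c ^ 2 := by
      ext t; ring
    rw [this, intervalIntegral.integral_add (i2.sub (i1.const_mul _)) (by simp),
      intervalIntegral.integral_sub i2 (i1.const_mul _), intervalIntegral.integral_const_mul,
      intervalIntegral.integral_const, ← sub_div]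
    simp; ring
  rw [e] at h0
  have hp : (0:ℝ) < 2 ^ n := by positivity
  have h1 := mul_nonneg hp.le h0
  have hcc := dav_eq f n k
  rw [← hc] at hcc
  have h2 := dav_eq (fun t => (f t) ^ 2) n k
  rw [h2]
  have h3 : (2:ℝ) ^ n * (c ^ 2 / 2 ^ n) = c ^ 2 := by field_simp
  have h4 := congrArg (fun z => 2 * c * z) hcc
  rw [mul_add, h3, mul_sub] at h1
  linarith

lemma sum_Bp_le {ε δ : ℝ} (hε0 : 0 < ε) (hδ : δ ∈ Set.Ioo ε 1) (hg : g δ ε = 0)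
    {φ : ℝ → ℝ} (hφ : BMOd ε φ) (n : ℕ) :
    (∑ k ∈ Finset.range (2 ^ n), Bp δ (dav φ n k, dav (fun t => (φ t) ^ 2) n k)) / 2 ^ n ≤
      Bp δ (∫ t in (0:ℝ)..1, φ t, ∫ t in (0:ℝ)..1, (φ t) ^ 2) := by
  obtain ⟨h1, h2, h3⟩ := hφ
  induction n with
  | zero => simp [dav_eq]
  | succ n ih =>
    refine le_trans ?_ ih
    have hp : (0:ℝ) < 2 ^ n := by positivity
    rw [pow_succ' 2 n, sum_range_two_mul_pair, pow_succ' (2:ℝ) n, ← div_div]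
    apply div_le_div_of_nonneg_right _ hp.le
    rw [div_le_iff₀ two_pos, Finset.sum_mul]
    apply Finset.sum_le_sum
    intro k hk
    have hk := Finset.mem_range.1 hk
    have hk1 : 2 * k < 2 ^ (n + 1) := by rw [pow_succ]; omega
    have hk2 : 2 * k + 1 < 2 ^ (n + 1) := by rw [pow_succ]; omega
    have v : ∀ n k : ℕ, k < 2 ^ n → dav (fun t => (φ t) ^ 2) n k ≤ (dav φ n k) ^ 2 + ε ^ 2 := by
      intro n k hk
      have := h3 n k hk
      unfold dav; linarith
    rw [mul_comm _ (2:ℝ)]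
    exact Bp_mid hε0 hδ hg (v _ _ hk) (dav_sq_le h1 h2 hk1) (v _ _ hk1) (dav_sq_le h1 h2 hk2)
      (v _ _ hk2) (dav_split h1 hk) (dav_split h2 hk)

/-- the dyadic averaging step function -/
noncomputable def stepf (φ : ℝ → ℝ) (n : ℕ) (t : ℝ) : ℝ := dav φ n ⌊2 ^ n * t⌋₊

lemma stepf_meas (φ : ℝ → ℝ) (n : ℕ) : Measurable (stepf φ n) := by
  have h1 : Measurable (fun t : ℝ => ⌊2 ^ n * t⌋₊) :=
    Nat.measurable_floor.comp (measurable_const.mul measurable_id)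
  exact (measurable_from_nat (f := dav φ n)).comp h1

lemma stepf_lint (φ : ℝ → ℝ) (n m : ℕ) :
    ∫⁻ t in Set.Ico (0:ℝ) ((m : ℝ) / 2 ^ n), ENNReal.ofReal (Real.exp (stepf φ n t)) =
      ENNReal.ofReal ((∑ k ∈ Finset.range m, Real.exp (dav φ n k)) / 2 ^ n) := by
  have hp : (0:ℝ) < 2 ^ n := by positivity
  induction m with
  | zero => simp
  | succ m ih =>
    have hu : Set.Ico (0:ℝ) (((m + 1 : ℕ) : ℝ) / 2 ^ n) =
        Set.Ico (0:ℝ) ((m : ℝ) / 2 ^ n) ∪ Set.Ico ((m : ℝ) / 2 ^ n) (((m + 1 : ℕ) : ℝ) / 2 ^ n) := by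
      rw [Set.Ico_union_Ico_eq_Ico (by positivity)]
      gcongr; simp
    rw [hu, lintegral_union measurableSet_Ico, ih, Finset.sum_range_succ, add_div,
      ENNReal.ofReal_add (by positivity) (by positivity)]
    · congr 1
      have : Set.EqOn (fun t => ENNReal.ofReal (Real.exp (stepf φ n t)))
          (fun _ => ENNReal.ofReal (Real.exp (dav φ n m)))
          (Set.Ico ((m : ℝ) / 2 ^ n) (((m + 1 : ℕ) : ℝ) / 2 ^ n)) := by
        intro t ht
        have hfl : ⌊2 ^ n * t⌋₊ = m := by
          have a1 := (div_le_iff₀ hp).1 ht.1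
          have a2 := (lt_div_iff₀ hp).1 ht.2
          push_cast at a2
          have hpt : 0 ≤ 2 ^ n * t := (by positivity : (0:ℝ) ≤ m).trans (by linarith)
          exact (Nat.floor_eq_iff hpt).2 ⟨by linarith, by linarith⟩
        simp only [stepf, hfl]
      rw [setLIntegral_congr_fun measurableSet_Ico this, setLIntegral_const, Real.volume_Ico,
        ← ENNReal.ofReal_mul (Real.exp_pos _).le]
      congr 1
      push_cast
      field_simp; ring
    · rw [Set.disjoint_left]
      intro t h1 h2
      exact absurd h1.2 (not_lt.2 h2.1)

lemma stepf_tendsto {φ : ℝ → ℝ} (hφ : IntervalIntegrable φ volume 0 1) :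
    ∀ᵐ t ∂(volume.restrict (Set.Ico (0:ℝ) 1)),
      Filter.Tendsto (fun n => stepf φ n t) Filter.atTop (nhds (φ t)) := by
  have hi : IntegrableOn φ (Set.Icc 0 1) := by
    rwa [intervalIntegrable_iff_integrableOn_Icc_of_le zero_le_one] at hφ
  have hl : LocallyIntegrable ((Set.Icc (0:ℝ) 1).indicator φ) :=
    (hi.integrable_indicator measurableSet_Icc).locallyIntegrable
  have := IsUnifLocDoublingMeasure.ae_tendsto_average (μ := (volume : Measure ℝ)) hl 1
  rw [ae_restrict_iff' measurableSet_Ico]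
  filter_upwards [this] with t ht htm
  have h := ht (l := Filter.atTop) (fun n : ℕ => ((⌊2 ^ n * t⌋₊ : ℝ) + 1 / 2) / 2 ^ n)
    (fun n : ℕ => (1 / 2 : ℝ) ^ (n + 1)) ?_ ?_
  · rw [Set.indicator_of_mem (show t ∈ Set.Icc (0:ℝ) 1 from ⟨htm.1, htm.2.le⟩)] at h
    refine h.congr ?_
    intro n
    have hp : (0:ℝ) < 2 ^ n := by positivity
    have hk : ⌊2 ^ n * t⌋₊ < 2 ^ n := by
      rw [Nat.floor_lt (mul_nonneg hp.le htm.1)]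
      push_cast
      nlinarith [htm.2]
    unfold stepf
    rw [dav_eq]
    have hsub := dy_sub hk
    have hle : ((⌊2 ^ n * t⌋₊ : ℕ) : ℝ) / 2 ^ n ≤ (((⌊2 ^ n * t⌋₊ : ℕ) : ℝ) + 1) / 2 ^ n := by
      gcongr; linarith
    rw [Set.uIcc_of_le hle, Set.uIcc_of_le zero_le_one] at hsub
    rw [Real.closedBall_eq_Icc]
    generalize ⌊2 ^ n * t⌋₊ = k at *
    have e1 : ((k : ℝ) + 1 / 2) / 2 ^ n - (1 / 2 : ℝ) ^ (n + 1) = (k : ℝ) / 2 ^ n := by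
      rw [div_pow, one_pow, pow_succ]; field_simp; ring
    have e2 : ((k : ℝ) + 1 / 2) / 2 ^ n + (1 / 2 : ℝ) ^ (n + 1) = ((k : ℝ) + 1) / 2 ^ n := by
      rw [div_pow, one_pow, pow_succ]; field_simp; ring
    rw [e1, e2, setAverage_eq, setIntegral_congr_fun measurableSet_Icc
      (fun x hx => Set.indicator_of_mem (hsub hx) φ), integral_Icc_eq_integral_Ioc,
      intervalIntegral.integral_of_le hle, Measure.real, Real.volume_Icc, ← sub_div,
      ENNReal.toReal_ofReal (by simp)]
    simp
  · rw [tendsto_nhdsWithin_iff]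
    refine ⟨?_, Filter.Eventually.of_forall fun n => ?_⟩
    · exact (tendsto_pow_atTop_nhds_zero_of_lt_one (by norm_num) (by norm_num)).comp
        (Filter.tendsto_add_atTop_nat 1)
    · simp only [Set.mem_Ioi]; positivity
  · refine Filter.Eventually.of_forall fun n => ?_
    have hp : (0:ℝ) < 2 ^ n := by positivity
    have hpt : 0 ≤ 2 ^ n * t := mul_nonneg hp.le htm.1
    have a1 := Nat.floor_le hpt
    have a2 := Nat.lt_floor_add_one (2 ^ n * t)
    rw [Real.closedBall_eq_Icc]
    generalize ⌊2 ^ n * t⌋₊ = k at *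
    have e1 : ((k : ℝ) + 1 / 2) / 2 ^ n - 1 * (1 / 2 : ℝ) ^ (n + 1) = (k : ℝ) / 2 ^ n := by
      rw [div_pow, one_pow, pow_succ]; field_simp; ring
    have e2 : ((k : ℝ) + 1 / 2) / 2 ^ n + 1 * (1 / 2 : ℝ) ^ (n + 1) = ((k : ℝ) + 1) / 2 ^ n := by
      rw [div_pow, one_pow, pow_succ]; field_simp; ring
    rw [e1, e2]
    exact ⟨(div_le_iff₀ hp).2 (by linarith), (le_div_iff₀ hp).2 (by linarith)⟩

/-- Upper Bellman estimate in the dyadic case: if `δ ∈ (ε,1)` solves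
`g(δ,ε) = 0`, then for every `φ ∈ BMO^d_ε([0,1])` the integral of `e^φ` is at
most `B⁺_δ(∫φ, ∫φ²)`. -/
theorem stmt19 (ε δ : ℝ) (hε0 : 0 < ε) (hε1 : ε < Real.sqrt 2 * Real.log 2)
    (hδ : δ ∈ Set.Ioo ε 1) (hg : g δ ε = 0)
    (φ : ℝ → ℝ) (hφ : BMOd ε φ) :
    IntervalIntegrable (fun t => Real.exp (φ t)) volume 0 1 ∧
    (∫ t in (0:ℝ)..1, Real.exp (φ t)) ≤
      Bp δ (∫ t in (0:ℝ)..1, φ t, ∫ t in (0:ℝ)..1, (φ t) ^ 2) := by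
  obtain ⟨h1, h2, h3⟩ := id hφ
  have hδ0 : 0 < δ := hε0.trans hδ.1
  set C := Bp δ (∫ t in (0:ℝ)..1, φ t, ∫ t in (0:ℝ)..1, (φ t) ^ 2) with hC
  have hstep : ∀ n, ∫⁻ t in Set.Ico (0:ℝ) 1, ENNReal.ofReal (Real.exp (stepf φ n t)) ≤
      ENNReal.ofReal C := by
    intro n
    have e := stepf_lint φ n (2 ^ n)
    have e1 : ((2 ^ n : ℕ) : ℝ) / 2 ^ n = 1 := by push_cast; exact div_self (by positivity)
    rw [e1] at e
    rw [e]
    apply ENNReal.ofReal_le_ofReal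
    refine le_trans ?_ (sum_Bp_le hε0 hδ hg hφ n)
    apply div_le_div_of_nonneg_right _ (by positivity)
    apply Finset.sum_le_sum
    intro k hk
    exact Bp_ge (x := (dav φ n k, dav (fun t => (φ t) ^ 2) n k)) hδ0 hδ.2
      (dav_sq_le h1 h2 (Finset.mem_range.1 hk))
  have hlim : ∫⁻ t in Set.Ico (0:ℝ) 1, ENNReal.ofReal (Real.exp (φ t)) ≤ ENNReal.ofReal C := by
    have hF := lintegral_liminf_le (μ := volume.restrict (Set.Ico (0:ℝ) 1)) (u := Filter.atTop)
      (f := fun n t => ENNReal.ofReal (Real.exp (stepf φ n t)))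
      (fun n => (Real.measurable_exp.comp (stepf_meas φ n)).ennreal_ofReal)
    have hcongr : ∫⁻ t in Set.Ico (0:ℝ) 1, ENNReal.ofReal (Real.exp (φ t)) =
        ∫⁻ t in Set.Ico (0:ℝ) 1, Filter.liminf
          (fun n => ENNReal.ofReal (Real.exp (stepf φ n t))) Filter.atTop := by
      apply lintegral_congr_ae
      filter_upwards [stepf_tendsto h1] with t ht
      exact (((ENNReal.continuous_ofReal.comp Real.continuous_exp).tendsto _).comp
        ht).liminf_eq.symm
    rw [hcongr]
    refine hF.trans ?_
    refine (Filter.liminf_le_liminf (Filter.Eventually.of_forall hstep)).trans ?_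
    simp
  have hIoc : ∫⁻ t in Set.Ioc (0:ℝ) 1, ENNReal.ofReal (Real.exp (φ t)) ≤ ENNReal.ofReal C := by
    rwa [← restrict_Ico_eq_restrict_Ioc]
  have hint : IntegrableOn (fun t => Real.exp (φ t)) (Set.Ioc 0 1) := by
    refine ⟨Real.continuous_exp.comp_aestronglyMeasurable
      ((intervalIntegrable_iff_integrableOn_Ioc_of_le zero_le_one).1 h1).aestronglyMeasurable, ?_⟩
    rw [hasFiniteIntegral_iff_ofReal (Filter.Eventually.of_forall fun t => (Real.exp_pos _).le)]
    exact hIoc.trans_lt ENNReal.ofReal_lt_top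
  refine ⟨(intervalIntegrable_iff_integrableOn_Ioc_of_le zero_le_one).2 hint, ?_⟩
  rw [intervalIntegral.integral_of_le zero_le_one]
  have hC0 : 0 ≤ C := by
    have hd := dav_sq_le h1 h2 (n := 0) (k := 0) (by norm_num)
    simp only [dav_eq] at hd
    norm_num at hd
    exact (Real.exp_pos _).le.trans (Bp_ge hδ0 hδ.2 hd)
  rw [← ENNReal.ofReal_le_ofReal_iff hC0, ofReal_integral_eq_lintegral_ofReal hint
    (Filter.Eventually.of_forall fun t => (Real.exp_pos _).le)]
  exact hIoc
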